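/- arXiv:2306.15762 — 3 statements merged into one kernel-verified Lean document; each statement's English description precedes it below -/
import Mathlib

section
/- Let ν be a finite Borel measure on ℝ³ × S² with total mass A = ν(ℝ³ × S²), let M, k ≥ 0, and let u : ℝ³ × S² → ℝ satisfy |u(y,m)| ≤ M for all (y,m) and |u(y,m) − u(y′,m′)| ≤ k·(‖y − y′‖ + ‖m − m′‖) for all arguments. Let (c,n₀) ∈ ℝ³ × S², let κ ≥ 0, η ≥ 0, and θ ∈ (0, π/2]. Assume: (i) ν is supported in {(y,m) : ‖y − c‖ ≤ (κ+1)·η and ‖m − n₀‖ ≤ 6√2·κ·η/sin θ}; (ii) a ≥ 0 with |a − A| ≤ 3·A·κ·η. Then |∫ u dν − a·u(c,n₀)| ≤ 10·A·((κ+1)/sin θ)·(k + M)·η. -/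
open MeasureTheory

local notation "E3" => EuclideanSpace ℝ (Fin 3)
local notation "S2" => Metric.sphere (0 : EuclideanSpace ℝ (Fin 3)) 1

/-- Per-face estimate with explicit constant 10: `ν` plays the role of the varifold of the
curved patch `Δ` (total mass `A = ν(ℝ³ × S²)` its area), `a • δ_{(c,n₀)}` that of the
discrete varifold of the inscribed triangle, `η` the greatest edge length, `θ` the smallest
angle, `κ` the greatest principal curvature. -/
theorem statement1
    (ν : Measure (E3 × S2)) [IsFiniteMeasure ν]
    (M k : ℝ) (hM : 0 ≤ M) (hk : 0 ≤ k)
    (u : E3 × S2 → ℝ)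
    (hub : ∀ p : E3 × S2, |u p| ≤ M)
    (hul : ∀ p q : E3 × S2,
      |u p - u q| ≤ k * (‖p.1 - q.1‖ + ‖(p.2 : E3) - (q.2 : E3)‖))
    (c : E3) (n₀ : S2) (κ η θ a : ℝ)
    (hκ : 0 ≤ κ) (hη : 0 ≤ η) (hθ : θ ∈ Set.Ioc (0 : ℝ) (Real.pi / 2))
    (hsupp : ν {p : E3 × S2 |
      ¬ (‖p.1 - c‖ ≤ (κ + 1) * η ∧
          ‖(p.2 : E3) - (n₀ : E3)‖ ≤ 6 * Real.sqrt 2 * κ * η / Real.sin θ)} = 0)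
    (ha : 0 ≤ a)
    (haA : |a - (ν Set.univ).toReal| ≤ 3 * (ν Set.univ).toReal * κ * η) :
    |(∫ p, u p ∂ν) - a * u (c, n₀)| ≤
      10 * (ν Set.univ).toReal * ((κ + 1) / Real.sin θ) * (k + M) * η := by
  have hs0 : 0 < Real.sin θ := Real.sin_pos_of_pos_of_lt_pi hθ.1 (by linarith [hθ.2, Real.pi_pos])
  have hs1 : Real.sin θ ≤ 1 := Real.sin_le_one θ
  have hcont : Continuous u := by
    have hL : LipschitzWith (Real.toNNReal (2 * k)) u := by
      apply LipschitzWith.of_dist_le_mul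
      intro p q
      have h1 : ‖p.1 - q.1‖ ≤ dist p q := by
        rw [← dist_eq_norm, Prod.dist_eq]; exact le_max_left _ _
      have h2 : ‖(p.2 : E3) - (q.2 : E3)‖ ≤ dist p q := by
        rw [← dist_eq_norm, ← Subtype.dist_eq, Prod.dist_eq]; exact le_max_right _ _
      rw [Real.coe_toNNReal _ (by positivity), Real.dist_eq]
      calc _ ≤ _ := hul p q
        _ ≤ k * (dist p q + dist p q) := by gcongr
        _ = _ := by ring
    exact hL.continuous
  have hint : Integrable u ν :=
    Integrable.of_bound hcont.aestronglyMeasurable M (Filter.Eventually.of_forall hub)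
  set A := (ν Set.univ).toReal with hA
  have hA0 : 0 ≤ A := ENNReal.toReal_nonneg
  set u0 := u (c, n₀) with hu0
  set t := (Real.sin θ)⁻¹ with ht
  have ht1 : 1 ≤ t := (one_le_inv₀ hs0).2 hs1
  have hsq : Real.sqrt 2 ≤ 3 / 2 := by
    rw [Real.sqrt_le_left (by norm_num)]; norm_num
  have hae : ∀ᵐ p ∂ν, ‖u p - u0‖ ≤ k * (10 * (κ + 1) * η * t) := by
    have h : ∀ᵐ p ∂ν, (‖p.1 - c‖ ≤ (κ + 1) * η ∧
          ‖(p.2 : E3) - (n₀ : E3)‖ ≤ 6 * Real.sqrt 2 * κ * η / Real.sin θ) := hsupp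
    filter_upwards [h] with p hp
    refine (hul p (c, n₀)).trans (mul_le_mul_of_nonneg_left ?_ hk)
    have h1 : (κ + 1) * η ≤ (κ + 1) * η * t := le_mul_of_one_le_right (by positivity) ht1
    have h2 : 6 * Real.sqrt 2 * κ * η / Real.sin θ ≤ 9 * (κ + 1) * η * t := by
      rw [div_eq_mul_inv]
      have : 6 * Real.sqrt 2 ≤ 9 := by linarith
      gcongr
      linarith
    calc _ ≤ _ := add_le_add hp.1 hp.2
      _ ≤ _ := by linarith
  have hI : |(∫ p, u p ∂ν) - A * u0| ≤ k * (10 * (κ + 1) * η * t) * A := by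
    have h := norm_integral_le_of_norm_le_const hae
    rw [integral_sub hint (integrable_const _), integral_const] at h
    simpa [Measure.real, hA] using h
  have hB : |(A - a) * u0| ≤ 3 * A * κ * η * M := by
    rw [abs_mul, abs_sub_comm]
    exact mul_le_mul haA (hub _) (abs_nonneg _) (by positivity)
  have hC : 3 * A * κ * η * M ≤ 10 * A * (κ + 1) * η * M * t := by
    have : 3 * A * κ * η * M ≤ 10 * A * (κ + 1) * η * M := by
      gcongr
      · norm_num
      · linarith
    exact this.trans (le_mul_of_one_le_right (by positivity) ht1)
  calc |(∫ p, u p ∂ν) - a * u0| = |((∫ p, u p ∂ν) - A * u0) + (A - a) * u0| := by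
        congr 1; ring
    _ ≤ _ := abs_add_le _ _
    _ ≤ k * (10 * (κ + 1) * η * t) * A + 10 * A * (κ + 1) * η * M * t :=
        add_le_add hI (hB.trans hC)
    _ = _ := by rw [div_eq_mul_inv]; ring
end

section
/- Let I be a finite index set. For each i ∈ I let ν_i be a finite Borel measure on ℝ³ × S² with total mass A_i, let (c_i, n_i) ∈ ℝ³ × S², and let a_i ≥ 0. Let M, k ≥ 0 and let u : ℝ³ × S² → ℝ satisfy |u| ≤ M everywhere and |u(y,m) − u(y′,m′)| ≤ k·(‖y − y′‖ + ‖m − m′‖). Let κ ≥ 0, η ≥ 0, θ ∈ (0, π/2], and assume for every i ∈ I: (i) ν_i is supported in {(y,m) : ‖y − c_i‖ ≤ (κ+1)·η and ‖m − n_i‖ ≤ 6√2·κ·η/sin θ}; (ii) |a_i − A_i| ≤ 3·A_i·κ·η. Set a(S) = Σ_{i∈I} A_i. Then |Σ_{i∈I} ∫ u dν_i − Σ_{i∈I} a_i·u(c_i, n_i)| ≤ 10·a(S)·((κ+1)/sin θ)·(k + M)·η. -/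
open MeasureTheory

local notation "E3" => EuclideanSpace ℝ (Fin 3)
local notation "S2" => Metric.sphere (0 : EuclideanSpace ℝ (Fin 3)) 1

/-- Global form of Theorem 1: summing the per-face estimates over a finite index set `I`
(faces of the mesh / patches partitioning the surface `S`), we get
`|μ_S(u) - μ_X(u)| ≤ 10 · a(S) · ((κ+1)/sin θ) · (k + M) · η`. -/
theorem statement2
    {I : Type*} [Fintype I]
    (ν : I → Measure (E3 × S2)) [∀ i, IsFiniteMeasure (ν i)]
    (c : I → E3) (n : I → S2) (a : I → ℝ) (ha : ∀ i, 0 ≤ a i)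
    (M k : ℝ) (hM : 0 ≤ M) (hk : 0 ≤ k)
    (u : E3 × S2 → ℝ)
    (hub : ∀ p : E3 × S2, |u p| ≤ M)
    (hul : ∀ p q : E3 × S2,
      |u p - u q| ≤ k * (‖p.1 - q.1‖ + ‖(p.2 : E3) - (q.2 : E3)‖))
    (κ η θ : ℝ)
    (hκ : 0 ≤ κ) (hη : 0 ≤ η) (hθ : θ ∈ Set.Ioc (0 : ℝ) (Real.pi / 2))
    (hsupp : ∀ i, (ν i) {p : E3 × S2 |
      ¬ (‖p.1 - c i‖ ≤ (κ + 1) * η ∧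
          ‖(p.2 : E3) - ((n i) : E3)‖ ≤ 6 * Real.sqrt 2 * κ * η / Real.sin θ)} = 0)
    (haA : ∀ i, |a i - ((ν i) Set.univ).toReal| ≤ 3 * ((ν i) Set.univ).toReal * κ * η) :
    |(∑ i, ∫ p, u p ∂(ν i)) - ∑ i, a i * u (c i, n i)| ≤
      10 * (∑ i, ((ν i) Set.univ).toReal) * ((κ + 1) / Real.sin θ) * (k + M) * η := by
  have hs0 : 0 < Real.sin θ :=
    Real.sin_pos_of_pos_of_lt_pi hθ.1 (by linarith [hθ.2, Real.pi_pos])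
  have hs1 : Real.sin θ ≤ 1 := Real.sin_le_one θ
  have hr : Real.sqrt 2 ≤ 3 / 2 := by
    rw [Real.sqrt_le_left (by norm_num)]; norm_num
  have hcont : Continuous u := by
    rw [continuous_iff_continuousAt]
    intro q
    have h0 : Filter.Tendsto
        (fun p : E3 × S2 => k * (‖p.1 - q.1‖ + ‖(p.2 : E3) - (q.2 : E3)‖)) (nhds q) (nhds 0) := by
      have hc : Continuous
          (fun p : E3 × S2 => k * (‖p.1 - q.1‖ + ‖(p.2 : E3) - (q.2 : E3)‖)) := by fun_prop
      have := hc.tendsto q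
      simpa using this
    refine tendsto_iff_dist_tendsto_zero.2 (squeeze_zero (fun _ => dist_nonneg) (fun p => ?_) h0)
    rw [Real.dist_eq]
    exact hul p q
  have hint : ∀ i, Integrable u (ν i) := fun i =>
    Integrable.of_bound hcont.aestronglyMeasurable M (Filter.Eventually.of_forall hub)
  rw [← Finset.sum_sub_distrib]
  refine (Finset.abs_sum_le_sum_abs _ _).trans ?_
  rw [Finset.mul_sum, Finset.sum_mul, Finset.sum_mul, Finset.sum_mul]
  refine Finset.sum_le_sum fun i _ => ?_
  have haAi := haA i
  have hA : 0 ≤ ((ν i) Set.univ).toReal := ENNReal.toReal_nonneg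
  have h1 : |∫ p, (u p - u (c i, n i)) ∂(ν i)| ≤
      (k * ((κ + 1) * η + 6 * Real.sqrt 2 * κ * η / Real.sin θ)) * ((ν i) Set.univ).toReal := by
    rw [← Real.norm_eq_abs]
    refine norm_integral_le_of_norm_le_const (μ := ν i) ?_
    have hae : ∀ᵐ p ∂(ν i), ‖p.1 - c i‖ ≤ (κ + 1) * η ∧
        ‖(p.2 : E3) - ((n i) : E3)‖ ≤ 6 * Real.sqrt 2 * κ * η / Real.sin θ := hsupp i
    filter_upwards [hae] with p hp
    exact (hul p (c i, n i)).trans (mul_le_mul_of_nonneg_left (add_le_add hp.1 hp.2) hk)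
  rw [integral_sub (hint i) (integrable_const _), integral_const, smul_eq_mul] at h1
  change |_ - ((ν i) Set.univ).toReal * _| ≤ _ at h1
  have hu0 := hub (c i, n i)
  generalize ((ν i) Set.univ).toReal = A at *
  generalize (∫ p, u p ∂(ν i)) = J at *
  generalize u (c i, n i) = w at *
  have h2 : |(a i - A) * w| ≤ 3 * A * κ * η * M := by
    rw [abs_mul]
    exact mul_le_mul haAi hu0 (abs_nonneg _) (by positivity)
  have h3 : |J - a i * w| ≤ |J - A * w| + |(a i - A) * w| := by
    have : J - a i * w = (J - A * w) - (a i - A) * w := by ring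
    rw [this]
    exact abs_sub _ _
  have hT : κ + 1 ≤ (κ + 1) / Real.sin θ := le_div_self (by linarith) hs0 hs1
  have hB : 6 * Real.sqrt 2 * κ / Real.sin θ ≤ 9 * ((κ + 1) / Real.sin θ) := by
    rw [← mul_div_assoc]
    refine div_le_div_of_nonneg_right ?_ hs0.le
    nlinarith
  have e1 : k * ((κ + 1) * η + 6 * Real.sqrt 2 * κ * η / Real.sin θ) * A
      = (k * η * A) * ((κ + 1) + 6 * Real.sqrt 2 * κ / Real.sin θ) := by ring
  have e2 : (k * η * A) * ((κ + 1) + 6 * Real.sqrt 2 * κ / Real.sin θ)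
      ≤ (k * η * A) * (10 * ((κ + 1) / Real.sin θ)) :=
    mul_le_mul_of_nonneg_left (by linarith) (by positivity)
  have e3 : (A * η * M) * (3 * κ) ≤ (A * η * M) * (10 * ((κ + 1) / Real.sin θ)) :=
    mul_le_mul_of_nonneg_left (by linarith) (by positivity)
  linarith
end

section
/- Let U, V ⊆ ℝ² be open sets, let f : U → ℝ³ be continuously differentiable with ∂₁f(p) × ∂₂f(p) ≠ 0 for all p ∈ U (an immersion), and let φ : V → U be a continuously differentiable bijection with continuously differentiable inverse and det(Dφ(q)) > 0 for all q ∈ V. Set g = f ∘ φ, and for an immersed parameterization h let ν_h = (∂₁h × ∂₂h)/‖∂₁h × ∂₂h‖ denote its unit normal field. Then for every bounded continuous function u : ℝ³ × S² → ℝ for which p ↦ u(f(p), ν_f(p))·‖∂₁f(p) × ∂₂f(p)‖ is Lebesgue integrable on U, one has ∫_V u(g(q), ν_g(q)) ‖∂₁g(q) × ∂₂g(q)‖ dq = ∫_U u(f(p), ν_f(p)) ‖∂₁f(p) × ∂₂f(p)‖ dp. -/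
open MeasureTheory

local notation "E2" => EuclideanSpace ℝ (Fin 2)
local notation "E3" => EuclideanSpace ℝ (Fin 3)
local notation "S2" => Metric.sphere (0 : EuclideanSpace ℝ (Fin 3)) 1

/-- The cross product on `ℝ³ = EuclideanSpace ℝ (Fin 3)`. -/
noncomputable def cross3 (v w : EuclideanSpace ℝ (Fin 3)) : EuclideanSpace ℝ (Fin 3) :=
  (EuclideanSpace.equiv (Fin 3) ℝ).symm
    (crossProduct ((EuclideanSpace.equiv (Fin 3) ℝ) v) ((EuclideanSpace.equiv (Fin 3) ℝ) w))

/-- Normalization of a nonzero vector of `ℝ³` to a point of the unit sphere `S²`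
(a junk value on `S²` is returned for `v = 0`). -/
noncomputable def toS2 (v : EuclideanSpace ℝ (Fin 3)) :
    Metric.sphere (0 : EuclideanSpace ℝ (Fin 3)) 1 :=
  letI := Classical.dec (v = 0)
  if h : v = 0 then
    ⟨EuclideanSpace.single 0 1, by simp [mem_sphere_zero_iff_norm]⟩
  else
    ⟨‖v‖⁻¹ • v, by
      simp [mem_sphere_zero_iff_norm, norm_smul,
        inv_mul_cancel₀ (norm_ne_zero_iff.mpr h)]⟩

/-- First partial derivative of a map defined on `ℝ²`. -/
noncomputable def pd1 {F : Type*} [NormedAddCommGroup F] [NormedSpace ℝ F]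
    (h : EuclideanSpace ℝ (Fin 2) → F) (p : EuclideanSpace ℝ (Fin 2)) : F :=
  fderiv ℝ h p (EuclideanSpace.single 0 1)

/-- Second partial derivative of a map defined on `ℝ²`. -/
noncomputable def pd2 {F : Type*} [NormedAddCommGroup F] [NormedSpace ℝ F]
    (h : EuclideanSpace ℝ (Fin 2) → F) (p : EuclideanSpace ℝ (Fin 2)) : F :=
  fderiv ℝ h p (EuclideanSpace.single 1 1)

lemma cross3_comp (L : EuclideanSpace ℝ (Fin 2) →L[ℝ] EuclideanSpace ℝ (Fin 3))
    (A : EuclideanSpace ℝ (Fin 2) →L[ℝ] EuclideanSpace ℝ (Fin 2)) :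
    cross3 (L (A (EuclideanSpace.single 0 1))) (L (A (EuclideanSpace.single 1 1))) =
      A.det • cross3 (L (EuclideanSpace.single 0 1)) (L (EuclideanSpace.single 1 1)) := by
  have hx : ∀ x : EuclideanSpace ℝ (Fin 2),
      x = x 0 • EuclideanSpace.single 0 1 + x 1 • EuclideanSpace.single 1 1 := by
    intro x
    ext i
    fin_cases i <;> simp
  have hL : ∀ x : EuclideanSpace ℝ (Fin 2),
      L x = x 0 • L (EuclideanSpace.single 0 1) + x 1 • L (EuclideanSpace.single 1 1) := by
    intro x
    conv_lhs => rw [hx x]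
    simp
  have hd : A.det = A (EuclideanSpace.single 0 1) 0 * A (EuclideanSpace.single 1 1) 1 -
      A (EuclideanSpace.single 1 1) 0 * A (EuclideanSpace.single 0 1) 1 := by
    rw [ContinuousLinearMap.det,
      ← LinearMap.det_toMatrix (EuclideanSpace.basisFun (Fin 2) ℝ).toBasis, Matrix.det_fin_two]
    simp [LinearMap.toMatrix_apply]
  rw [hd, hL (A (EuclideanSpace.single 0 1)), hL (A (EuclideanSpace.single 1 1))]
  generalize L (EuclideanSpace.single 0 1) = a
  generalize L (EuclideanSpace.single 1 1) = b
  ext i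
  fin_cases i <;> simp [cross3, cross_apply] <;> ring

lemma toS2_smul (c : ℝ) (hc : 0 < c) (v : EuclideanSpace ℝ (Fin 3)) :
    toS2 (c • v) = toS2 v := by
  by_cases h : v = 0
  · simp [h]
  · have h' : c • v ≠ 0 := smul_ne_zero hc.ne' h
    apply Subtype.ext
    simp only [toS2, h, h', dif_neg, not_false_eq_true]
    rw [norm_smul, Real.norm_of_nonneg hc.le, smul_smul]
    congr 1
    field_simp

/-- Invariance of the varifold of a parameterized surface under orientation-preserving
reparameterization: for an immersion `f` on `U` and a `C¹` diffeomorphism `φ : V → U` with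
positive Jacobian determinant, the varifold integrals `μ_S(u)` computed from `f` on `U` and
from `g = f ∘ φ` on `V` agree, for any bounded continuous test function `u` on `ℝ³ × S²`
making the integrand for `f` integrable. -/
theorem statement9
    (U V : Set E2) (hU : IsOpen U) (hV : IsOpen V)
    (f : E2 → E3) (hf : ContDiffOn ℝ 1 f U)
    (himm : ∀ p ∈ U, cross3 (pd1 f p) (pd2 f p) ≠ 0)
    (φ ψ : E2 → E2) (hφ : ContDiffOn ℝ 1 φ V)
    (hbij : Set.BijOn φ V U)
    (hψ : ContDiffOn ℝ 1 ψ U)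
    (hinv1 : ∀ q ∈ V, ψ (φ q) = q) (hinv2 : ∀ p ∈ U, φ (ψ p) = p)
    (hdet : ∀ q ∈ V, 0 < LinearMap.det ((fderiv ℝ φ q) : E2 →ₗ[ℝ] E2))
    (u : E3 × S2 → ℝ) (hu : Continuous u) (hub : ∃ C, ∀ p, |u p| ≤ C)
    (hint : IntegrableOn
      (fun p => u (f p, toS2 (cross3 (pd1 f p) (pd2 f p))) * ‖cross3 (pd1 f p) (pd2 f p)‖)
      U) :
    (∫ q in V, u ((f ∘ φ) q, toS2 (cross3 (pd1 (f ∘ φ) q) (pd2 (f ∘ φ) q))) *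
        ‖cross3 (pd1 (f ∘ φ) q) (pd2 (f ∘ φ) q)‖) =
      ∫ p in U, u (f p, toS2 (cross3 (pd1 f p) (pd2 f p))) *
        ‖cross3 (pd1 f p) (pd2 f p)‖ := by
  have hφd : ∀ q ∈ V, HasFDerivAt φ (fderiv ℝ φ q) q := fun q hq =>
    ((hφ.differentiableOn one_ne_zero).differentiableAt (hV.mem_nhds hq)).hasFDerivAt
  have hfd : ∀ p ∈ U, HasFDerivAt f (fderiv ℝ f p) p := fun p hp =>
    ((hf.differentiableOn one_ne_zero).differentiableAt (hU.mem_nhds hp)).hasFDerivAt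
  conv_rhs => rw [← hbij.image_eq]
  rw [integral_image_eq_integral_abs_det_fderiv_smul volume hV.measurableSet
    (fun q hq => (hφd q hq).hasFDerivWithinAt) hbij.injOn]
  refine setIntegral_congr_fun hV.measurableSet fun q hq => ?_
  have hc : fderiv ℝ (f ∘ φ) q = (fderiv ℝ f (φ q)).comp (fderiv ℝ φ q) :=
    ((hfd _ (hbij.mapsTo hq)).comp q (hφd q hq)).fderiv
  have hpos : 0 < (fderiv ℝ φ q).det := hdet q hq
  have key : cross3 (pd1 (f ∘ φ) q) (pd2 (f ∘ φ) q) =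
      (fderiv ℝ φ q).det • cross3 (pd1 f (φ q)) (pd2 f (φ q)) := by
    simp only [pd1, pd2, hc, ContinuousLinearMap.comp_apply]
    exact cross3_comp _ _
  simp only [key, toS2_smul _ hpos, norm_smul, Real.norm_eq_abs, Function.comp_apply,
    smul_eq_mul]
  ring
end
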